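/- arXiv:2010.01511 — 2 statements merged into one kernel-verified Lean document; each statement's English description precedes it below -/
import Mathlib

section
/- Let m ≥ 1 and n ≥ 1 be integers, and let a_1, …, a_n be integers with 0 ≤ a_j ≤ m for all j and a_n ≥ 1. If t is a real number with |t| < 1 satisfying tⁿ = a_1 t^{n−1} + a_2 t^{n−2} + ⋯ + a_n, then t < 0 and |t| ≥ (√(m² + 4) − m)/2. -/
lemma aux_low (m t : ℝ) (c : ℕ → ℝ) (h0 : ∀ k, 0 ≤ c k) (hm : ∀ k, c k ≤ m)
    (h1 : 1 ≤ c 0) (ht : t < 0) (h : t ^ 2 < 1 + m * t) (r : ℕ) :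
    t ^ (2 * r) ≤ ∑ k ∈ Finset.range (2 * r + 1), c k * t ^ k := by
  induction r with
  | zero => simpa using h1
  | succ r ih =>
    rw [show 2 * (r + 1) + 1 = (2 * r + 1) + 1 + 1 by ring, Finset.sum_range_succ,
      Finset.sum_range_succ]
    have hp : 0 < t ^ (2 * r) := by rw [pow_mul]; have := sq_pos_of_neg ht; positivity
    have e1 : t ^ (2 * r + 1) = t ^ (2 * r) * t := pow_succ _ _
    have e2 : t ^ (2 * r + 1 + 1) = t ^ (2 * r) * t ^ 2 := by ring
    have e3 : t ^ (2 * (r + 1)) = t ^ (2 * r) * t ^ 2 := by ring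
    have g1 := mul_lt_mul_of_pos_left h hp
    have g2 : 0 ≤ c (2 * r + 1 + 1) * (t ^ (2 * r) * t ^ 2) :=
      mul_nonneg (h0 _) (by positivity)
    have g3 : m * (t ^ (2 * r) * t) ≤ c (2 * r + 1) * (t ^ (2 * r) * t) :=
      mul_le_mul_of_nonpos_right (hm _) (mul_nonpos_of_nonneg_of_nonpos hp.le ht.le)
    rw [e1, e2, e3]
    linarith

theorem stmt_5 (m n : ℕ) (hm : 1 ≤ m) (hn : 1 ≤ n) (a : Fin n → ℤ)
    (ha0 : ∀ j, 0 ≤ a j) (ham : ∀ j, a j ≤ (m : ℤ))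
    (halast : 1 ≤ a ⟨n - 1, by omega⟩)
    (t : ℝ) (ht : |t| < 1)
    (heq : t ^ n = ∑ j : Fin n, (a j : ℝ) * t ^ (n - 1 - (j : ℕ))) :
    t < 0 ∧ (Real.sqrt ((m : ℝ) ^ 2 + 4) - m) / 2 ≤ |t| := by
  obtain ⟨c, hc⟩ : ∃ c : ℕ → ℝ, c = fun k => if h : k < n then (a ⟨n - 1 - k, by omega⟩ : ℝ) else 0 :=
    ⟨_, rfl⟩
  have h0 : ∀ k, 0 ≤ c k := by
    intro k; rw [hc]; dsimp only; split_ifs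
    · exact_mod_cast ha0 _
    · exact le_rfl
  have hcm : ∀ k, c k ≤ m := by
    intro k; rw [hc]; dsimp only; split_ifs
    · exact_mod_cast ham _
    · positivity
  have h1 : 1 ≤ c 0 := by
    rw [hc]; dsimp only; rw [dif_pos (by omega)]
    exact_mod_cast halast
  have hs : t ^ n = ∑ k ∈ Finset.range n, c k * t ^ k := by
    rw [heq, ← Finset.sum_range_reflect, ← Fin.sum_univ_eq_sum_range
      (fun k => c (n - 1 - k) * t ^ (n - 1 - k))]
    refine Finset.sum_congr rfl fun j _ => ?_
    have hj := j.2
    rw [hc]; dsimp only; rw [dif_pos (by omega)]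
    congr 3
    congr 1
    ext
    simp only
    omega
  have htneg : t < 0 := by
    by_contra hge
    push Not at hge
    have : c 0 * t ^ 0 ≤ ∑ k ∈ Finset.range n, c k * t ^ k :=
      Finset.single_le_sum (f := fun k => c k * t ^ k)
        (fun k _ => mul_nonneg (h0 k) (pow_nonneg hge k)) (by simp; omega)
    rw [abs_of_nonneg hge] at ht
    have h2 : t ^ n < 1 := pow_lt_one₀ hge ht (by omega)
    simp at this
    linarith
  refine ⟨htneg, ?_⟩
  rw [abs_of_neg htneg]
  by_contra hlt
  push Not at hlt
  have hmp : (0:ℝ) ≤ m := by positivity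
  have hq : t ^ 2 < 1 + m * t := by
    have h3 : -2 * t + m < Real.sqrt ((m : ℝ) ^ 2 + 4) := by linarith
    rw [Real.lt_sqrt (by linarith)] at h3
    nlinarith
  have key := aux_low m t c h0 hcm h1 htneg hq
  rcases Nat.even_or_odd' n with ⟨r, hr | hr⟩
  · obtain ⟨q, rfl⟩ : ∃ q, r = q + 1 := ⟨r - 1, by omega⟩
    have k := key q
    rw [hr, show 2 * (q + 1) = 2 * q + 1 + 1 by ring, Finset.sum_range_succ] at hs
    have hp : 0 < t ^ (2 * q) := by rw [pow_mul]; have := sq_pos_of_neg htneg; positivity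
    have e1 : t ^ (2 * q + 1) = t ^ (2 * q) * t := pow_succ _ _
    have e2 : t ^ (2 * q + 1 + 1) = t ^ (2 * q) * t ^ 2 := by ring
    have g1 := mul_lt_mul_of_pos_left hq hp
    have g3 : m * (t ^ (2 * q) * t) ≤ c (2 * q + 1) * (t ^ (2 * q) * t) :=
      mul_le_mul_of_nonpos_right (hcm _) (mul_nonpos_of_nonneg_of_nonpos hp.le htneg.le)
    rw [e1, e2] at hs
    linarith
  · have k := key r
    rw [hr] at hs
    have hp : 0 < t ^ (2 * r) := by rw [pow_mul]; have := sq_pos_of_neg htneg; positivity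
    have e1 : t ^ (2 * r + 1) = t ^ (2 * r) * t := pow_succ _ _
    have := mul_neg_of_pos_of_neg hp htneg
    linarith
end

section
/- Let g be a polynomial with real coefficients, let c = (√5 − 1)/2, suppose g(c)·g(−c) > 0, and let h > 0. Then there exists n₀ ∈ ℕ, depending only on g and h, such that for every polynomial f with integer coefficients all of absolute value at most h, and every n ≥ n₀, P_n(c)·P_n(−c) > 0, where P_n(x) = f(x)·xⁿ + g(x). -/
theorem aux_bound (c : ℝ) (h0 : 0 ≤ c) (h1 : c < 1) (h : ℤ) (hh : 0 < h) (f : Polynomial ℤ)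
    (hf : ∀ i : ℕ, |f.coeff i| ≤ h) (x : ℝ) (hx : |x| = c) :
    |Polynomial.aeval x f| ≤ h * (1 - c)⁻¹ := by
  have hh' : (0 : ℝ) < h := by exact_mod_cast hh
  rw [Polynomial.aeval_eq_sum_range]
  calc _ ≤ ∑ i ∈ Finset.range (f.natDegree + 1), |f.coeff i • x ^ i| :=
        Finset.abs_sum_le_sum_abs _ _
    _ ≤ ∑ i ∈ Finset.range (f.natDegree + 1), (h : ℝ) * c ^ i := by
        apply Finset.sum_le_sum
        intro i _
        rw [zsmul_eq_mul, abs_mul, abs_pow, hx]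
        have : |(f.coeff i : ℝ)| ≤ h := by exact_mod_cast hf i
        gcongr
    _ = h * ∑ i ∈ Finset.range (f.natDegree + 1), c ^ i := by rw [Finset.mul_sum]
    _ ≤ h * (1 - c)⁻¹ := by
        rw [← tsum_geometric_of_lt_one h0 h1]
        gcongr
        exact (summable_geometric_of_lt_one h0 h1).sum_le_tsum _ (fun i _ => by positivity)

theorem aux_sign (a b A B : ℝ) (ha : |a| < |A|) (hb : |b| < |B|) (hAB : A * B > 0) :
    (a + A) * (b + B) > 0 := by
  rcases pos_and_pos_or_neg_and_neg_of_mul_pos hAB with ⟨h1, h2⟩ | ⟨h1, h2⟩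
  · rw [abs_of_pos h1, abs_lt] at ha
    rw [abs_of_pos h2, abs_lt] at hb
    exact mul_pos (by linarith) (by linarith)
  · rw [abs_of_neg h1, abs_lt] at ha
    rw [abs_of_neg h2, abs_lt] at hb
    exact mul_pos_of_neg_of_neg (by linarith) (by linarith)

theorem stmt_7 (g : Polynomial ℝ) (c : ℝ) (hc : c = (Real.sqrt 5 - 1) / 2)
    (hg : g.eval c * g.eval (-c) > 0) (h : ℤ) (hh : 0 < h) :
    ∃ n₀ : ℕ, ∀ f : Polynomial ℤ, (∀ i : ℕ, |f.coeff i| ≤ h) → ∀ n : ℕ, n₀ ≤ n →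
      ((Polynomial.aeval c f) * c ^ n + g.eval c) *
        ((Polynomial.aeval (-c) f) * (-c) ^ n + g.eval (-c)) > 0 := by
  have h5 : Real.sqrt 5 ^ 2 = 5 := Real.sq_sqrt (by norm_num)
  have h5' := Real.sqrt_nonneg 5
  have h0 : 0 ≤ c := by rw [hc]; nlinarith
  have h1 : c < 1 := by rw [hc]; nlinarith
  have hA : 0 < |g.eval c| := abs_pos.2 (left_ne_zero_of_mul hg.ne')
  have hB : 0 < |g.eval (-c)| := abs_pos.2 (right_ne_zero_of_mul hg.ne')
  have ht : Filter.Tendsto (fun n : ℕ => (h * (1 - c)⁻¹ : ℝ) * c ^ n) Filter.atTop (nhds 0) := by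
    simpa using (tendsto_pow_atTop_nhds_zero_of_lt_one h0 h1).const_mul (h * (1 - c)⁻¹ : ℝ)
  obtain ⟨n₀, hn⟩ := Filter.eventually_atTop.1
    ((ht.eventually_lt_const hA).and (ht.eventually_lt_const hB))
  refine ⟨n₀, fun f hf n hn' => ?_⟩
  obtain ⟨k1, k2⟩ := hn n hn'
  have key : ∀ x : ℝ, |x| = c → |Polynomial.aeval x f * x ^ n| ≤ (h * (1 - c)⁻¹ : ℝ) * c ^ n := by
    intro x hx
    rw [abs_mul, abs_pow, hx]
    have := aux_bound c h0 h1 h hh f hf x hx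
    gcongr
  exact aux_sign _ _ _ _ ((key c (abs_of_nonneg h0)).trans_lt k1)
    ((key (-c) (by rw [abs_neg, abs_of_nonneg h0])).trans_lt k2) hg
end
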